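/- arXiv:1305.0744 — 2 statements merged into one kernel-verified Lean document; each statement's English description precedes it below -/
import Mathlib

section
/- Let R be an associative ring, G a group, and A an RG-module. If K and L are subgroups of G such that A/C_A(K) and A/C_A(L) are both minimax R-modules, then A/C_A(⟨K, L⟩) is also a minimax R-module. -/
/-- `C_A(H)`: the `R`-submodule of `A` consisting of the elements fixed by every
element of the subgroup `H` of `G`. -/
def moduleCentralizer (R : Type*) [Ring R] {G : Type*} [Group G] (A : Type*)
    [AddCommGroup A] [Module R A] [DistribMulAction G A] [SMulCommClass G R A]
    (H : Subgroup G) : Submodule R A where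
  carrier := {a | ∀ g ∈ H, g • a = a}
  add_mem' := fun {a b} ha hb g hg => by rw [smul_add, ha g hg, hb g hg]
  zero_mem' := fun g _ => smul_zero g
  smul_mem' := fun r a ha g hg => by rw [smul_comm, ha g hg]

/-- An `R`-module is minimax if it has a finite series of submodules each of whose
factors is either a Noetherian `R`-module or an Artinian `R`-module. -/
def Module.IsMinimax (R M : Type*) [Ring R] [AddCommGroup M] [Module R M] : Prop :=
  ∃ (n : ℕ) (f : Fin (n + 1) → Submodule R M),
    Monotone f ∧ f 0 = ⊥ ∧ f (Fin.last n) = ⊤ ∧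
    ∀ i : Fin n,
      IsNoetherian R (↥(f i.succ) ⧸ Submodule.comap (f i.succ).subtype (f i.castSucc)) ∨
      IsArtinian R (↥(f i.succ) ⧸ Submodule.comap (f i.succ).subtype (f i.castSucc))

/-!
A submodule series pulls back along a linear map, its factors embedding in the original ones, and
pushes forward along a linear map, its factors becoming quotients of the original ones. Hence the
class of minimax modules is closed under submodules and, by splicing a pushed-forward series with a
pulled-back one, under extensions. An element is fixed by `⟨K, L⟩` as soon as it is fixed by `K` and
by `L`, so `A/C_A(⟨K, L⟩)` embeds in `A/C_A(K) × A/C_A(L)`.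
-/

section MinimaxModules

variable {R M N P : Type*} [Ring R] [AddCommGroup M] [Module R M] [AddCommGroup N] [Module R N]
  [AddCommGroup P] [Module R P]

variable (R M) in
/-- The relation between consecutive terms `X ≤ Y` of a minimax series: the factor `Y/X` is
Noetherian or Artinian. It is a `SetRel` so that finite series are Mathlib's `RelSeries`. -/
def minimaxStep : SetRel (Submodule R M) (Submodule R M) :=
  {(X, Y) : Submodule R M × Submodule R M | X ≤ Y ∧
    (IsNoetherian R (Y ⧸ X.submoduleOf Y) ∨ IsArtinian R (Y ⧸ X.submoduleOf Y))}

theorem comap_mem_minimaxStep (f : M →ₗ[R] N) {X Y : Submodule R N}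
    (h : (X, Y) ∈ minimaxStep R N) : (X.comap f, Y.comap f) ∈ minimaxStep R M := by
  obtain ⟨hXY, hfactor⟩ := h
  let factorMap := ((X.comap f).submoduleOf (Y.comap f)).mapQ (X.submoduleOf Y)
    (f.submoduleComap Y) fun _ hm => hm
  have factorMap_injective : Function.Injective factorMap := by
    refine LinearMap.ker_eq_bot.mp (Submodule.ker_liftQ_eq_bot _ _ _ ?_)
    rw [LinearMap.ker_comp, Submodule.ker_mkQ]
    rfl
  refine ⟨Submodule.comap_mono hXY, ?_⟩
  rcases hfactor with _ | _
  · exact .inl (isNoetherian_of_injective factorMap factorMap_injective)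
  · exact .inr (isArtinian_of_injective factorMap factorMap_injective)

theorem map_mem_minimaxStep (f : M →ₗ[R] N) {X Y : Submodule R M}
    (h : (X, Y) ∈ minimaxStep R M) : (X.map f, Y.map f) ∈ minimaxStep R N := by
  obtain ⟨hXY, hfactor⟩ := h
  have submoduleOf_le : X.submoduleOf Y ≤
      ((X.map f).submoduleOf (Y.map f)).comap (f.submoduleMap Y) :=
    fun _ hm => Submodule.mem_map_of_mem hm
  let factorMap := (X.submoduleOf Y).mapQ _ (f.submoduleMap Y) submoduleOf_le
  have range_factorMap : LinearMap.range factorMap = ⊤ := by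
    rw [Submodule.range_mapQ _ _ _ submoduleOf_le,
      LinearMap.range_eq_top.mpr (f.submoduleMap_surjective Y), Submodule.map_top,
      Submodule.range_mkQ]
  refine ⟨Submodule.map_mono hXY, ?_⟩
  rcases hfactor with _ | _
  · exact .inl (isNoetherian_of_surjective factorMap range_factorMap)
  · exact .inr (isArtinian_of_surjective _ factorMap (LinearMap.range_eq_top.mp range_factorMap))

theorem isMinimax_iff_exists_relSeries :
    Module.IsMinimax R M ↔ ∃ s : RelSeries (minimaxStep R M), s.head = ⊥ ∧ s.last = ⊤ := by
  constructor
  · rintro ⟨n, f, hmono, hbot, htop, hfactor⟩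
    exact ⟨⟨n, f, fun i => ⟨hmono i.castSucc_lt_succ.le, hfactor i⟩⟩, hbot, htop⟩
  · rintro ⟨s, hbot, htop⟩
    exact ⟨s.length, s, Fin.monotone_iff_le_succ.mpr fun i => (s.step i).1, hbot, htop,
      fun i => (s.step i).2⟩

theorem exists_relSeries_head_eq_ker (f : M →ₗ[R] N) (hN : Module.IsMinimax R N) :
    ∃ s : RelSeries (minimaxStep R M), s.head = LinearMap.ker f ∧ s.last = ⊤ := by
  obtain ⟨s, hbot, htop⟩ := isMinimax_iff_exists_relSeries.mp hN
  refine ⟨s.map ⟨Submodule.comap f, comap_mem_minimaxStep f⟩, ?_, ?_⟩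
  · simp [hbot]
  · simp [htop]

theorem exists_relSeries_last_eq_range (f : M →ₗ[R] N) (hM : Module.IsMinimax R M) :
    ∃ s : RelSeries (minimaxStep R N), s.head = ⊥ ∧ s.last = LinearMap.range f := by
  obtain ⟨s, hbot, htop⟩ := isMinimax_iff_exists_relSeries.mp hM
  refine ⟨s.map ⟨Submodule.map f, map_mem_minimaxStep f⟩, ?_, ?_⟩
  · simp [hbot]
  · simp [htop]

theorem isMinimax_of_injective (f : M →ₗ[R] N) (hf : Function.Injective f)
    (hN : Module.IsMinimax R N) : Module.IsMinimax R M := by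
  rw [isMinimax_iff_exists_relSeries, ← LinearMap.ker_eq_bot.mpr hf]
  exact exists_relSeries_head_eq_ker f hN

theorem isMinimax_of_range_eq_ker (f : M →ₗ[R] N) (g : N →ₗ[R] P)
    (h : LinearMap.range f = LinearMap.ker g) (hM : Module.IsMinimax R M)
    (hP : Module.IsMinimax R P) : Module.IsMinimax R N := by
  obtain ⟨s, s_head, s_last⟩ := exists_relSeries_last_eq_range f hM
  obtain ⟨t, t_head, t_last⟩ := exists_relSeries_head_eq_ker g hP
  have connect : s.last = t.head := by rw [s_last, t_head, h]
  exact isMinimax_iff_exists_relSeries.mpr ⟨s.smash t connect,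
    (RelSeries.head_smash connect).trans s_head, (RelSeries.last_smash connect).trans t_last⟩

theorem isMinimax_prod (hM : Module.IsMinimax R M) (hN : Module.IsMinimax R N) :
    Module.IsMinimax R (M × N) :=
  isMinimax_of_range_eq_ker (LinearMap.inl R M N) (LinearMap.snd R M N)
    (LinearMap.range_inl R M N) hM hN

theorem isMinimax_quotient_inf {X Y : Submodule R M} (hX : Module.IsMinimax R (M ⧸ X))
    (hY : Module.IsMinimax R (M ⧸ Y)) : Module.IsMinimax R (M ⧸ X ⊓ Y) := by
  have ker_eq : X ⊓ Y = LinearMap.ker (X.mkQ.prod Y.mkQ) := by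
    rw [LinearMap.ker_prod, Submodule.ker_mkQ, Submodule.ker_mkQ]
  exact isMinimax_of_injective ((X ⊓ Y).liftQ (X.mkQ.prod Y.mkQ) ker_eq.le)
    (LinearMap.ker_eq_bot.mp (Submodule.ker_liftQ_eq_bot' _ _ ker_eq)) (isMinimax_prod hX hY)

end MinimaxModules

theorem moduleCentralizer_sup (R : Type*) [Ring R] {G : Type*} [Group G] (A : Type*)
    [AddCommGroup A] [Module R A] [DistribMulAction G A] [SMulCommClass G R A]
    (K L : Subgroup G) :
    moduleCentralizer R A (K ⊔ L) = moduleCentralizer R A K ⊓ moduleCentralizer R A L :=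
  -- `a ∈ C_A(H)` unfolds to `H ≤ stabilizer G a`.
  Submodule.ext fun a => sup_le_iff (c := MulAction.stabilizer G a)

/-- If `A/C_A(K)` and `A/C_A(L)` are minimax `R`-modules, then so is `A/C_A(⟨K, L⟩)`. -/
theorem minimax_quotient_centralizer_sup (R : Type*) [Ring R] (G : Type*) [Group G]
    (A : Type*) [AddCommGroup A] [Module R A] [DistribMulAction G A] [SMulCommClass G R A]
    (K L : Subgroup G)
    (hK : Module.IsMinimax R (A ⧸ moduleCentralizer R A K))
    (hL : Module.IsMinimax R (A ⧸ moduleCentralizer R A L)) :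
    Module.IsMinimax R (A ⧸ moduleCentralizer R A (K ⊔ L)) := by
  rw [moduleCentralizer_sup]
  exact isMinimax_quotient_inf hK hL
end

section
/- Let R be an associative ring, G an infinite group with G ≠ G' (G is not equal to its derived subgroup), and A an RG-module. If A/C_A(G) is not an Artinian R-module but A/C_A(H) is an Artinian R-module for every proper subgroup H of G, then G has no proper subgroups of finite index and G/G' is isomorphic to a quasi-cyclic q-group C_{q^∞} for some prime q. -/
/-- The quasi-cyclic (Prüfer) `q`-group `C_{q^∞}`: the `q`-primary component of `ℚ/ℤ`. -/
def PruferGroup (q : ℕ) (hq : q.Prime) :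
    AddSubgroup (ℚ ⧸ AddSubgroup.zmultiples (1 : ℚ)) :=
  haveI : Fact q.Prime := ⟨hq⟩
  AddCommGroup.primaryComponent (ℚ ⧸ AddSubgroup.zmultiples (1 : ℚ)) q

/-!
If `H ⊔ K = G`, then `C_A(G) = C_A(H) ⊓ C_A(K)`, so `A/C_A(G)` embeds into `A/C_A(H) × A/C_A(K)`.
Hence the hypotheses force `G` not to be the join of two proper subgroups. Being infinite, such a
`G` is not cyclic, so adjoining one element to a proper subgroup leaves it proper; starting from a
proper subgroup of finite index, this could not go on forever.

Both properties pass to the abelian group `Q = G/G'`. Having no proper subgroup of finite index,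
`Q` is divisible. An element of infinite order could be sent to elements of order `2` and `3` in
`C_{2^∞}` and `C_{3^∞}`, and the kernels of these two maps would together generate `Q`; so `Q` is
torsion. Finally an element of order `p` in `Q` yields an embedding of `C_{p^∞}` into `Q`, by
injectivity of `Q`; its image is a direct summand by injectivity of `C_{p^∞}`, hence all of `Q`.
-/

section Artinian

variable {R : Type*} [Ring R]

lemma isArtinian_quotient_inf {M : Type*} [AddCommGroup M] [Module R M] (N P : Submodule R M)
    [IsArtinian R (M ⧸ N)] [IsArtinian R (M ⧸ P)] : IsArtinian R (M ⧸ N ⊓ P) := by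
  let φ : M →ₗ[R] (M ⧸ N) × (M ⧸ P) := N.mkQ.prod P.mkQ
  have hφ : N ⊓ P = LinearMap.ker φ := by
    rw [LinearMap.ker_prod, Submodule.ker_mkQ, Submodule.ker_mkQ]
  exact isArtinian_of_injective ((N ⊓ P).liftQ φ hφ.le)
    (LinearMap.ker_eq_bot.mp (Submodule.ker_liftQ_eq_bot' _ φ hφ))

variable {G : Type*} [Group G] {A : Type*} [AddCommGroup A] [Module R A] [DistribMulAction G A]
  [SMulCommClass G R A]

lemma moduleCentralizer_sup_s4 (H K : Subgroup G) :
    moduleCentralizer R A (H ⊔ K) = moduleCentralizer R A H ⊓ moduleCentralizer R A K := by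
  ext a
  change H ⊔ K ≤ MulAction.stabilizer G a ↔
    H ≤ MulAction.stabilizer G a ∧ K ≤ MulAction.stabilizer G a
  exact sup_le_iff

variable (R G A) in
lemma moduleCentralizer_bot : moduleCentralizer R A (⊥ : Subgroup G) = ⊤ := by
  refine Submodule.eq_top_iff'.mpr fun a g hg ↦ ?_
  rw [Subgroup.mem_bot.mp hg, one_smul]

lemma supIrred_top_of_isArtinian_quotient_moduleCentralizer
    (hG : ¬ IsArtinian R (A ⧸ moduleCentralizer R A (⊤ : Subgroup G)))
    (hH : ∀ H : Subgroup G, H ≠ ⊤ → IsArtinian R (A ⧸ moduleCentralizer R A H)) :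
    SupIrred (⊤ : Subgroup G) := by
  refine ⟨fun hmin ↦ hG ?_, fun H K hHK ↦ ?_⟩
  · rw [hmin.eq_bot, moduleCentralizer_bot]
    infer_instance
  · by_contra! ⟨hH_ne, hK_ne⟩
    have := hH H hH_ne
    have := hH K hK_ne
    rw [← hHK, moduleCentralizer_sup_s4] at hG
    exact hG (isArtinian_quotient_inf _ _)

end Artinian

section SupIrred

variable {G : Type*} [Group G]

@[to_additive]
lemma zpowers_ne_top_of_supIrred_top [Infinite G] (hG : SupIrred (⊤ : Subgroup G)) (g : G) :
    Subgroup.zpowers g ≠ ⊤ := by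
  intro hg
  have horder : orderOf g = 0 :=
    Infinite.orderOf_eq_zero_of_forall_mem_zpowers fun x ↦ hg ▸ Subgroup.mem_top x
  have hsup : Subgroup.zpowers (g ^ 2) ⊔ Subgroup.zpowers (g ^ 3) = ⊤ := by
    rw [eq_top_iff, ← hg, Subgroup.zpowers_le]
    have h2 : g ^ 2 ∈ Subgroup.zpowers (g ^ 2) ⊔ Subgroup.zpowers (g ^ 3) :=
      Subgroup.mem_sup_left (Subgroup.mem_zpowers _)
    have h3 : g ^ 3 ∈ Subgroup.zpowers (g ^ 2) ⊔ Subgroup.zpowers (g ^ 3) :=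
      Subgroup.mem_sup_right (Subgroup.mem_zpowers _)
    exact (Subgroup.mul_mem_cancel_left _ h2).mp (pow_succ g 2 ▸ h3)
  have hne {k : ℕ} (hk : k ≠ 1) : Subgroup.zpowers (g ^ k) ≠ ⊤ := by
    intro htop
    have hmem : g ∈ Subgroup.zpowers (g ^ k) := htop ▸ Subgroup.mem_top g
    rw [mem_zpowers_pow_iff, horder, Nat.gcd_zero_right] at hmem
    exact hk hmem
  rcases hG.2 hsup with h | h
  exacts [hne (by decide) h, hne (by decide) h]

@[to_additive]
lemma subgroup_eq_top_of_finiteIndex_of_supIrred_top [Infinite G] (hG : SupIrred (⊤ : Subgroup G))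
    (H : Subgroup G) [H.FiniteIndex] : H = ⊤ := by
  induction hn : H.index using Nat.strong_induction_on generalizing H with
  | _ n ih =>
    by_contra hH
    obtain ⟨g, hg⟩ : ∃ g, g ∉ H := by simpa [Subgroup.eq_top_iff'] using hH
    have hlt : H < H ⊔ Subgroup.zpowers g := by simpa [left_lt_sup] using hg
    have := Subgroup.finiteIndex_of_le hlt.le
    have hsup := ih _ (hn ▸ Subgroup.index_strictAnti hlt) (H ⊔ Subgroup.zpowers g) rfl
    exact (hG.2 hsup).elim hH (zpowers_ne_top_of_supIrred_top hG g)

lemma supIrred_top_of_surjective {H : Type*} [Group H] [Nontrivial H]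
    (hG : SupIrred (⊤ : Subgroup G)) {f : G →* H} (hf : Function.Surjective f) :
    SupIrred (⊤ : Subgroup H) := by
  refine ⟨not_isMin_top, fun K L hKL ↦ ?_⟩
  have hcomap : K.comap f ⊔ L.comap f = ⊤ := by
    rw [Subgroup.comap_sup_eq _ _ _ hf, hKL, Subgroup.comap_top]
  have hinj := Subgroup.comap_injective hf
  exact (hG.2 hcomap).imp (fun h ↦ hinj (h.trans (Subgroup.comap_top f).symm))
    (fun h ↦ hinj (h.trans (Subgroup.comap_top f).symm))

lemma supIrred_top_additive (hG : SupIrred (⊤ : Subgroup G)) :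
    SupIrred (⊤ : AddSubgroup (Additive G)) := by
  let e : AddSubgroup (Additive G) ≃o Subgroup G := AddSubgroup.toSubgroup'
  refine ⟨fun h ↦ hG.1 ?_, fun K L hKL ↦ ?_⟩
  · exact map_top e ▸ e.isMin_apply.mpr h
  · have hsup : e K ⊔ e L = ⊤ := by rw [← map_sup, hKL, map_top]
    exact (hG.2 hsup).imp (map_eq_top_iff e).mp (map_eq_top_iff e).mp

end SupIrred

section Extension

variable {A B : Type*} [AddCommGroup A] [AddCommGroup B] [DivisibleBy B ℤ]

lemma exists_addMonoidHom_apply_eq_of_addOrderOf_dvd {a : A} {b : B}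
    (h : addOrderOf b ∣ addOrderOf a) : ∃ f : A →+ B, f a = b := by
  -- For `a` of infinite order, `ZMod (addOrderOf a)` is `ZMod 0 = ℤ`.
  let toA : ZMod (addOrderOf a) →+ A :=
    ZMod.lift _ ⟨zmultiplesHom A a, by simp [addOrderOf_nsmul_eq_zero]⟩
  let toB : ZMod (addOrderOf a) →+ B :=
    ZMod.lift _ ⟨zmultiplesHom B b, by simpa using addOrderOf_dvd_iff_nsmul_eq_zero.mp h⟩
  have htoA : Function.Injective toA := by
    refine (ZMod.lift_injective _).mpr fun m hm ↦ ?_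
    rw [ZMod.intCast_zmod_eq_zero_iff_dvd]
    exact addOrderOf_dvd_iff_zsmul_eq_zero.mpr hm
  obtain ⟨f, hf⟩ := (Module.Baer.of_divisible B).extension_property_addMonoidHom toA htoA toB
  have hfa := DFunLike.congr_fun hf ((1 : ℤ) : ZMod (addOrderOf a))
  rw [AddMonoidHom.comp_apply, ZMod.lift_coe, ZMod.lift_coe] at hfa
  exact ⟨f, by simpa using hfa⟩

lemma surjective_of_injective_of_supIrred_top [Nontrivial B] (hA : SupIrred (⊤ : AddSubgroup A))
    {f : B →+ A} (hf : Function.Injective f) : Function.Surjective f := by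
  obtain ⟨r, hr⟩ := (Module.Baer.of_divisible B).extension_property_addMonoidHom f hf (.id B)
  have hrf : ∀ b, r (f b) = b := DFunLike.congr_fun hr
  have hsup : f.range ⊔ r.ker = ⊤ := by
    refine (AddSubgroup.eq_top_iff' _).mpr fun a ↦ ?_
    rw [← add_sub_cancel (f (r a)) a]
    refine AddSubgroup.add_mem_sup ⟨r a, rfl⟩ ?_
    rw [AddMonoidHom.mem_ker, map_sub, hrf, sub_self]
  rcases hA.2 hsup with hrange | hker
  · exact AddMonoidHom.range_eq_top.mp hrange
  · obtain ⟨b, hb⟩ := exists_ne (0 : B)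
    have hmem : f b ∈ r.ker := hker ▸ AddSubgroup.mem_top _
    exact absurd (hrf b ▸ hmem) hb

end Extension

lemma surjective_zsmul_of_forall_finiteIndex_eq_top {A : Type*} [AddCommGroup A]
    (hA : ∀ H : AddSubgroup A, H.FiniteIndex → H = ⊤) {n : ℤ} (hn : n ≠ 0) :
    Function.Surjective (n • · : A → A) := by
  intro a
  by_contra ha
  let N : AddSubgroup A := (zsmulAddGroupHom n).range
  have ha' : (a : A ⧸ N) ≠ 0 := fun h ↦ ha ((QuotientAddGroup.eq_zero_iff a).mp h)
  obtain ⟨χ, hχ⟩ := CharacterModule.exists_character_apply_ne_zero_of_ne_zero ha'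
  -- The range of a character of `A / n A` lies in the finite `n`-torsion of `ℚ / ℤ`.
  let f : A →+ AddCircle (1 : ℚ) := AddMonoidHom.comp χ (QuotientAddGroup.mk' N)
  have hf (x : A) : n.natAbs • f x = 0 := by
    have hx : ((n • x : A) : A ⧸ N) = 0 := (QuotientAddGroup.eq_zero_iff _).mpr ⟨x, rfl⟩
    rw [natAbs_nsmul_eq_zero, ← map_zsmul]
    exact (congrArg χ hx).trans (map_zero χ)
  have : Finite f.range := by
    refine (AddCircle.finite_torsion (1 : ℚ) (Int.natAbs_pos.mpr hn)).subset ?_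
    rintro _ ⟨x, rfl⟩
    exact hf x
  have hker : f.ker = ⊤ := hA _ (AddSubgroup.finiteIndex_ker f)
  exact hχ (hker ▸ AddSubgroup.mem_top a : a ∈ f.ker)

lemma ker_sup_ker_eq_top_of_coprime_addOrderOf {A B C : Type*} [AddGroup A] [AddMonoid B]
    [AddMonoid C] (f : A →+ B) (g : A →+ C)
    (h : ∀ a, (addOrderOf (f a)).Coprime (addOrderOf (g a))) : f.ker ⊔ g.ker = ⊤ := by
  refine (AddSubgroup.eq_top_iff' _).mpr fun a ↦ ?_
  obtain ⟨u, v, huv⟩ := Nat.isCoprime_iff_coprime.mpr (h a)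
  have hf : addOrderOf (f a) • a ∈ f.ker := by
    rw [AddMonoidHom.mem_ker, map_nsmul, addOrderOf_nsmul_eq_zero]
  have hg : addOrderOf (g a) • a ∈ g.ker := by
    rw [AddMonoidHom.mem_ker, map_nsmul, addOrderOf_nsmul_eq_zero]
  rw [← one_zsmul a, ← huv, add_zsmul, mul_zsmul, mul_zsmul, natCast_zsmul, natCast_zsmul]
  exact AddSubgroup.add_mem_sup (zsmul_mem hf u) (zsmul_mem hg v)

lemma surjective_zsmul_primaryComponent {A : Type*} [AddCommGroup A] [DivisibleBy A ℤ] {p : ℕ}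
    (hp : p.Prime) {n : ℤ} (hn : n ≠ 0) :
    Function.Surjective (n • · : AddCommGroup.primaryComponent A p → _) := by
  rintro ⟨a, k, hk⟩
  obtain ⟨b, rfl⟩ : ∃ b, n • b = a := ⟨_, DivisibleBy.div_cancel a hn⟩
  have hfin : FiniteMultiplicity (p : ℤ) n :=
    Int.finiteMultiplicity_iff.mpr ⟨by simpa using hp.ne_one, hn⟩
  obtain ⟨m, hnm, hm⟩ := hfin.exists_eq_pow_mul_and_not_dvd
  obtain ⟨u, v, huv⟩ : IsCoprime m ((p : ℤ) ^ k) :=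
    ((Nat.prime_iff_prime_int.mp hp).coprime_iff_not_dvd.mpr hm).symm.pow_right
  -- Multiplying the root `b` by `u * m ≡ 1 [ZMOD p ^ k]` removes its prime-to-`p` torsion without
  -- changing `n • b`.
  have hpk : (p : ℤ) ^ k • n • b = 0 := by rwa [← Nat.cast_pow, natCast_zsmul]
  set e := multiplicity (p : ℤ) n
  have hmem : p ^ (k + e) • (u * m) • b = 0 := by
    calc p ^ (k + e) • (u * m) • b = u • (p : ℤ) ^ k • ((p : ℤ) ^ e * m) • b := by
          rw [← natCast_zsmul]
          simp only [smul_smul]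
          push_cast
          ring_nf
      _ = 0 := by rw [← hnm, hpk, smul_zero]
  refine ⟨⟨(u * m) • b, k + e, hmem⟩, Subtype.ext ?_⟩
  calc n • (u * m) • b = (1 - v * (p : ℤ) ^ k) • n • b := by
        rw [smul_comm, ← huv, add_sub_cancel_right]
    _ = n • b := by rw [sub_smul, one_smul, mul_smul, hpk, smul_zero, sub_zero]

lemma addCircle_mem_zmultiples_of_addOrderOf_eq {𝕜 : Type*} [Field 𝕜] [LinearOrder 𝕜]
    [IsStrictOrderedRing 𝕜] {T : 𝕜} [Fact (0 < T)] {x y : AddCircle T}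
    (hx : IsOfFinAddOrder x) (hxy : addOrderOf x = addOrderOf y) :
    y ∈ AddSubgroup.zmultiples x := by
  set n := addOrderOf x with hn
  have hpos : 0 < n := hx.addOrderOf_pos
  let c : AddCircle T := ↑(T / n)
  have hc : addOrderOf c = n := AddCircle.addOrderOf_period_div hpos
  have eq_nsmul {z : AddCircle T} (hz : addOrderOf z = n) : ∃ m : ℕ, m.gcd n = 1 ∧ m • c = z := by
    obtain ⟨m, -, hm, rfl⟩ := (AddCircle.addOrderOf_eq_pos_iff hpos).mp hz
    refine ⟨m, hm, ?_⟩
    rw [← AddCircle.coe_nsmul, nsmul_eq_mul, mul_div_assoc', div_mul_eq_mul_div]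
  obtain ⟨k, hk, hkx⟩ := eq_nsmul hn.symm
  obtain ⟨l, -, rfl⟩ := eq_nsmul hxy.symm
  have hcx : c ∈ AddSubgroup.zmultiples x := by
    rwa [← hkx, mem_zmultiples_nsmul_iff, hc]
  exact nsmul_mem hcx l

namespace PruferGroup

variable {p : ℕ} {hp : p.Prime}

noncomputable instance divisibleBy : DivisibleBy (PruferGroup p hp) ℤ :=
  divisibleByOfSMulRightSurj _ _ (surjective_zsmul_primaryComponent hp)

lemma exists_addOrderOf_eq (p : ℕ) (hp : p.Prime) :
    ∃ c : PruferGroup p hp, addOrderOf c = p := by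
  let c : AddCircle (1 : ℚ) := ↑(1 / p : ℚ)
  have hc : addOrderOf c = p := AddCircle.addOrderOf_period_div hp.pos
  have hmem : c ∈ PruferGroup p hp :=
    ⟨1, by rw [pow_one]; nth_rw 1 [← hc]; exact addOrderOf_nsmul_eq_zero c⟩
  exact ⟨⟨c, hmem⟩, by rwa [← AddSubgroup.addOrderOf_coe]⟩

lemma exists_addOrderOf_eq_pow (y : PruferGroup p hp) : ∃ k, addOrderOf y = p ^ k := by
  have : Fact p.Prime := ⟨hp⟩
  rw [← AddSubgroup.addOrderOf_coe]
  exact AddCommGroup.mem_primaryComponent_iff_addOrderOf.mp y.2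

lemma injective_of_apply_ne_zero {B : Type*} [AddGroup B] {f : PruferGroup p hp →+ B}
    {c : PruferGroup p hp} (hc : addOrderOf c = p) (hfc : f c ≠ 0) : Function.Injective f := by
  refine (injective_iff_map_eq_zero f).mpr fun y hy ↦ ?_
  by_contra hy0
  obtain ⟨k, hk⟩ := exists_addOrderOf_eq_pow y
  obtain ⟨k, rfl⟩ : ∃ j, k = j + 1 := by
    refine Nat.exists_eq_succ_of_ne_zero ?_
    rintro rfl
    exact hy0 (AddMonoid.addOrderOf_eq_one_iff.mp (by simpa using hk))
  have hz : addOrderOf (p ^ k • y) = p := by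
    rw [addOrderOf_nsmul_of_dvd (pow_ne_zero _ hp.ne_zero) (hk ▸ pow_dvd_pow p k.le_succ), hk,
      pow_succ, Nat.mul_div_cancel_left _ (pow_pos hp.pos k)]
  obtain ⟨u, hu⟩ : (c : AddCircle (1 : ℚ)) ∈
      AddSubgroup.zmultiples ((p ^ k • y : PruferGroup p hp) : AddCircle (1 : ℚ)) := by
    refine addCircle_mem_zmultiples_of_addOrderOf_eq (addOrderOf_pos_iff.mp ?_) ?_
    · rw [AddSubgroup.addOrderOf_coe, hz]
      exact hp.pos
    · rw [AddSubgroup.addOrderOf_coe, AddSubgroup.addOrderOf_coe, hz, hc]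
  have huc : u • p ^ k • y = c := Subtype.ext hu
  exact hfc (by simp [← huc, hy])

end PruferGroup

section AbelianSupIrred

variable {Q : Type*} [AddCommGroup Q]

lemma isOfFinAddOrder_of_supIrred_top (hQ : SupIrred (⊤ : AddSubgroup Q)) (x : Q) :
    IsOfFinAddOrder x := by
  by_contra hx
  have horder : addOrderOf x = 0 := addOrderOf_eq_zero_iff.mpr hx
  obtain ⟨b, hb⟩ := PruferGroup.exists_addOrderOf_eq 2 Nat.prime_two
  obtain ⟨c, hc⟩ := PruferGroup.exists_addOrderOf_eq 3 Nat.prime_three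
  obtain ⟨f, rfl⟩ := exists_addMonoidHom_apply_eq_of_addOrderOf_dvd (horder ▸ dvd_zero _ :
    addOrderOf b ∣ addOrderOf x)
  obtain ⟨g, rfl⟩ := exists_addMonoidHom_apply_eq_of_addOrderOf_dvd (horder ▸ dvd_zero _ :
    addOrderOf c ∣ addOrderOf x)
  have hker : f.ker ⊔ g.ker = ⊤ := by
    refine ker_sup_ker_eq_top_of_coprime_addOrderOf f g fun y ↦ ?_
    obtain ⟨k, hk⟩ := PruferGroup.exists_addOrderOf_eq_pow (f y)
    obtain ⟨l, hl⟩ := PruferGroup.exists_addOrderOf_eq_pow (g y)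
    rw [hk, hl]
    exact Nat.Coprime.pow k l (by decide)
  rcases hQ.2 hker with hf | hg
  · have hfx : f x = 0 := (hf ▸ AddSubgroup.mem_top x : x ∈ f.ker)
    simp [hfx] at hb
  · have hgx : g x = 0 := (hg ▸ AddSubgroup.mem_top x : x ∈ g.ker)
    simp [hgx] at hc

lemma exists_addOrderOf_eq_prime_of_supIrred_top (hQ : SupIrred (⊤ : AddSubgroup Q)) :
    ∃ (p : ℕ) (x : Q), p.Prime ∧ addOrderOf x = p := by
  obtain ⟨x, hx⟩ : ∃ x : Q, x ≠ 0 := by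
    by_contra! h
    exact hQ.ne_bot ((AddSubgroup.eq_bot_iff_forall ⊤).mpr fun x _ ↦ h x)
  exact ⟨_, _, Nat.minFac_prime (mt AddMonoid.addOrderOf_eq_one_iff.mp hx),
    addOrderOf_nsmul_addOrderOf_sub (isOfFinAddOrder_of_supIrred_top hQ x).addOrderOf_pos.ne'
      (Nat.minFac_dvd _)⟩

theorem exists_addEquiv_pruferGroup_of_supIrred_top [Infinite Q]
    (hQ : SupIrred (⊤ : AddSubgroup Q)) :
    ∃ (p : ℕ) (hp : p.Prime), Nonempty (Q ≃+ PruferGroup p hp) := by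
  obtain ⟨p, x, hp, hx⟩ := exists_addOrderOf_eq_prime_of_supIrred_top hQ
  obtain ⟨c, hc⟩ := PruferGroup.exists_addOrderOf_eq p hp
  have hfin (H : AddSubgroup Q) (_ : H.FiniteIndex) : H = ⊤ :=
    addSubgroup_eq_top_of_finiteIndex_of_supIrred_top hQ H
  let _ : DivisibleBy Q ℤ :=
    divisibleByOfSMulRightSurj Q ℤ (surjective_zsmul_of_forall_finiteIndex_eq_top hfin)
  obtain ⟨f, rfl⟩ := exists_addMonoidHom_apply_eq_of_addOrderOf_dvd (hx.trans hc.symm).dvd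
  have hfc : f c ≠ 0 := fun h ↦ hp.ne_one (by rw [← hx, h, addOrderOf_zero])
  have hf := PruferGroup.injective_of_apply_ne_zero hc hfc
  have : Nontrivial (PruferGroup p hp) := nontrivial_of_ne c 0 fun h ↦ hfc (h ▸ map_zero f)
  exact ⟨p, hp,
    ⟨(AddEquiv.ofBijective f ⟨hf, surjective_of_injective_of_supIrred_top hQ hf⟩).symm⟩⟩

end AbelianSupIrred

/-- Lemma 2.2 (Artinian version): if `G` is infinite, `G ≠ G'`, `A/C_A(G)` is not Artinian
but `A/C_A(H)` is Artinian for every proper subgroup `H`, then `G` has no proper subgroups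
of finite index and `G/G'` is a quasi-cyclic `q`-group for some prime `q`. -/
theorem artinian_proper_subgroups (R : Type*) [Ring R] (G : Type*) [Group G] [Infinite G]
    (A : Type*) [AddCommGroup A] [Module R A] [DistribMulAction G A] [SMulCommClass G R A]
    (hG' : commutator G ≠ ⊤)
    (hG : ¬ IsArtinian R (A ⧸ moduleCentralizer R A (⊤ : Subgroup G)))
    (hH : ∀ H : Subgroup G, H ≠ ⊤ → IsArtinian R (A ⧸ moduleCentralizer R A H)) :
    (∀ H : Subgroup G, H.FiniteIndex → H = ⊤) ∧
    ∃ (q : ℕ) (hq : q.Prime),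
      Nonempty (Abelianization G ≃* Multiplicative (PruferGroup q hq)) := by
  have hsup := supIrred_top_of_isArtinian_quotient_moduleCentralizer hG hH
  have hfin (H : Subgroup G) (_ : H.FiniteIndex) : H = ⊤ :=
    subgroup_eq_top_of_finiteIndex_of_supIrred_top hsup H
  have : Infinite (Abelianization G) := by
    refine not_finite_iff_infinite.mp fun _ ↦ hG' (hfin _ ?_)
    have : Finite (G ⧸ commutator G) := ‹Finite (Abelianization G)›
    exact Subgroup.finiteIndex_of_finite_quotient
  have hQ : SupIrred (⊤ : AddSubgroup (Additive (Abelianization G))) :=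
    supIrred_top_additive <|
      supIrred_top_of_surjective hsup (QuotientGroup.mk'_surjective (commutator G))
  obtain ⟨p, hp, ⟨e⟩⟩ := exists_addEquiv_pruferGroup_of_supIrred_top hQ
  exact ⟨hfin, p, hp, ⟨AddEquiv.toMultiplicativeRight e⟩⟩
end
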